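/- (Special case e = v+1 of Theorem 3) Let v, μ be complex with v+1, v+2, v+3, μ, μ+1, μ+2, μ+v+1 not nonpositive integers. Then for all complex x: e^{−x} · ∑_{n≥0} ((−x)ⁿ/(μ)_n) · { L_n^{(v)}(x) − (x/(v+2))·L_n^{(v+1)}(x) } = ₃F₃[v+3, μ/2+v/2+1, μ/2+v/2+1/2; v+2, μ, μ+v+1; −4x] + (2x/μ) · ₃F₃[v+3, μ/2+v/2+1, μ/2+v/2+3/2; v+2, μ+1, μ+v+2; −4x] + (x²/(μ(μ+1))) · ₃F₃[v+3, μ/2+v/2+2, μ/2+v/2+3/2; v+2, μ+2, μ+v+3; −4x]. -/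

import Mathlib

open scoped BigOperators Nat

/-- Pochhammer (rising factorial) symbol `(a)_n`. -/
noncomputable def poch (a : ℂ) (n : ℕ) : ℂ := (ascPochhammer ℂ n).eval a

/-- General term of the generalized hypergeometric series `pFq`. -/
noncomputable def hypTerm (a b : List ℂ) (x : ℂ) (n : ℕ) : ℂ :=
  (a.map (fun c => poch c n)).prod / (b.map (fun c => poch c n)).prod * x ^ n / (n ! : ℂ)

/-- Generalized hypergeometric series `pFq[a; b; x]` (as a `tsum`). -/
noncomputable def hyp (a b : List ℂ) (x : ℂ) : ℂ := ∑' n : ℕ, hypTerm a b x n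

/-- Generalized Laguerre polynomial `L_n^{(v)}(x) = ((v+1)_n/n!)·₁F₁[−n; v+1; x]`. -/
noncomputable def Lag (n : ℕ) (v x : ℂ) : ℂ :=
  poch (v + 1) n / (n ! : ℂ) * hyp [-(n : ℂ)] [v + 1] x

/-!
Kummer's transformation in the form `e^{-x} L_n^{(v)}(x) = ∑ₘ (-x)^m (v+1+m)_n / (m! n!)` turns
`e^{-x} ∑ₙ (-x)^n L_n^{(v)}(x) / (μ)_n` into an absolutely convergent double series. Summing along
antidiagonals with the Chu–Vandermonde identity gives `∑_N (-x)^N (μ+v+N)_N / ((μ)_N N!)`. By the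
duplication formula each `₃F₃` on the right is a series of the same kind, with `v + 1` in place of
`v` and an extra factor `v + 2 + N`. Writing every series over the weights `(-x)^N / ((μ)_N N!)`
reduces the theorem to a polynomial identity between Pochhammer symbols (`poch_contiguous`).
-/

open Finset HasAntidiagonal Filter Topology

section Pochhammer

lemma poch_zero (a : ℂ) : poch a 0 = 1 := by simp [poch]

lemma poch_succ (a : ℂ) (n : ℕ) : poch a (n + 1) = poch a n * (a + n) :=
  ascPochhammer_succ_eval n a

lemma poch_add (a : ℂ) (m n : ℕ) : poch a (m + n) = poch a m * poch (a + m) n := by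
  simp [poch, ← ascPochhammer_mul]

lemma poch_succ' (a : ℂ) (n : ℕ) : poch a (n + 1) = a * poch (a + 1) n := by
  rw [add_comm, poch_add]
  simp [poch]

lemma poch_ne_zero {a : ℂ} (ha : ∀ k : ℕ, a ≠ -(k : ℂ)) (n : ℕ) : poch a n ≠ 0 := by
  rw [poch, Ne, ascPochhammer_eval_eq_zero_iff]
  rintro ⟨k, -, hk⟩
  exact ha k (by rw [hk, neg_neg])

lemma add_natCast_ne_neg_natCast {a : ℂ} (ha : ∀ k : ℕ, a ≠ -(k : ℂ)) (m k : ℕ) :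
    a + m ≠ -(k : ℂ) := fun h ↦
  ha (m + k) (by push_cast; linear_combination h)

lemma poch_neg_natCast (n k : ℕ) : poch (-(n : ℂ)) k = (-1) ^ k * (n.descFactorial k : ℂ) := by
  rw [poch, ascPochhammer_eval_neg_eq_descPochhammer, descPochhammer_eval_eq_descFactorial]

lemma poch_natCast_sub_add_one (m k : ℕ) :
    poch ((m : ℂ) - k + 1) k = (m.descFactorial k : ℂ) := by
  rw [poch, ← descPochhammer_eval_eq_ascPochhammer, descPochhammer_eval_eq_descFactorial]

lemma poch_two_mul (a : ℂ) (n : ℕ) :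
    poch (2 * a) (2 * n) = 4 ^ n * poch a n * poch (a + 1 / 2) n := by
  induction n with
  | zero => simp [poch_zero]
  | succ n ih =>
    rw [mul_add_one, poch_succ, poch_succ, ih, poch_succ, poch_succ]
    push_cast
    ring

lemma sum_antidiagonal_choose_mul_poch_mul_poch (a b : ℂ) (n : ℕ) :
    ∑ p ∈ antidiagonal n, (n.choose p.1 : ℂ) * (poch (a + p.2) p.1 * poch (b + p.1) p.2) =
      poch (a + b + n - 1) n := by
  have smeval_eq (r : ℂ) (k : ℕ) : (descPochhammer ℤ k).smeval r = poch (r - k + 1) k := by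
    rw [Polynomial.descPochhammer_smeval_eq_ascPochhammer,
      Polynomial.ascPochhammer_smeval_eq_eval, poch]
  have vandermonde := Ring.descPochhammer_smeval_add n (Commute.all (a + n - 1) (b + n - 1))
  simp only [smeval_eq] at vandermonde
  rw [show a + b + n - 1 = a + n - 1 + (b + n - 1) - n + 1 by ring, vandermonde]
  refine sum_congr rfl fun p hp ↦ ?_
  have hn : (n : ℂ) = p.1 + p.2 := by exact_mod_cast (mem_antidiagonal.mp hp).symm
  rw [hn]
  ring_nf

/-- The subtractions `N - 1` and `N - 2` truncate only where their coefficient vanishes. -/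
lemma poch_contiguous (c u : ℂ) (N : ℕ) :
    c * poch u N + N * ((u + 1 - c) * poch u (N - 1)) =
      (c + N) * poch (u + 1) N - 2 * (N * ((c + N - 1) * poch (u + 1) (N - 1))) +
        N * (N - 1) * ((c + N - 2) * poch (u + 1) (N - 2)) := by
  match N with
  | 0 => simp [poch_zero]
  | 1 =>
    simp only [poch_zero, poch_succ, Nat.sub_self, Nat.cast_zero, Nat.cast_one]
    ring
  | n + 2 =>
    simp only [Nat.add_sub_cancel, show n + 2 - 1 = n + 1 from rfl]
    rw [poch_succ' u (n + 1), poch_succ' u n, poch_succ (u + 1) (n + 1), poch_succ (u + 1) n]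
    push_cast
    ring

end Pochhammer

section Growth

lemma norm_poch_add_natCast_mul_factorial_le (a : ℂ) (m n : ℕ) :
    ‖poch (a + m) n‖ * m ! ≤ (‖a‖ + 1) ^ n * (m + n)! := by
  induction n with
  | zero => simp [poch_zero]
  | succ n ih =>
    have factor_le : ‖a + m + n‖ ≤ (‖a‖ + 1) * (m + n + 1) := calc
      ‖a + m + n‖ = ‖a + (m + n : ℕ)‖ := by push_cast; rw [add_assoc]
      _ ≤ ‖a‖ + (m + n : ℕ) := (norm_add_le _ _).trans_eq (by rw [Complex.norm_natCast])
      _ ≤ (‖a‖ + 1) * (m + n + 1) := by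
        push_cast
        nlinarith [norm_nonneg a, mul_nonneg (norm_nonneg a) (m + n : ℕ).cast_nonneg]
    calc ‖poch (a + m) (n + 1)‖ * m ! = ‖poch (a + m) n‖ * m ! * ‖a + m + n‖ := by
          rw [poch_succ, norm_mul]; ring
      _ ≤ (‖a‖ + 1) ^ n * (m + n)! * ((‖a‖ + 1) * (m + n + 1)) := by gcongr
      _ = (‖a‖ + 1) ^ (n + 1) * (m + (n + 1))! := by
          rw [← add_assoc, Nat.factorial_succ]; push_cast; ring

lemma norm_poch_le (a : ℂ) (n : ℕ) : ‖poch a n‖ ≤ (‖a‖ + 1) ^ n * n ! := by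
  simpa using norm_poch_add_natCast_mul_factorial_le a 0 n

lemma norm_poch_add_natCast_le (a : ℂ) (m n : ℕ) :
    ‖poch (a + m) n‖ ≤ (‖a‖ + 1) ^ n * (2 ^ (m + n) * n !) := by
  have factorial_add_le : (m + n)! ≤ 2 ^ (m + n) * n ! * m ! := by
    rw [← Nat.add_choose_mul_factorial_mul_factorial m n, mul_right_comm]
    gcongr
    exact Nat.choose_le_two_pow _ _
  refine le_of_mul_le_mul_right ?_ (Nat.cast_pos.mpr m.factorial_pos : (0 : ℝ) < m !)
  calc ‖poch (a + m) n‖ * m ! ≤ (‖a‖ + 1) ^ n * (m + n)! :=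
        norm_poch_add_natCast_mul_factorial_le a m n
    _ ≤ (‖a‖ + 1) ^ n * (2 ^ (m + n) * n ! * m !) := by
        gcongr
        exact_mod_cast factorial_add_le
    _ = (‖a‖ + 1) ^ n * (2 ^ (m + n) * n !) * m ! := by ring

lemma exists_natCast_add_one_le_mul_norm {b : ℂ} (hb : ∀ k : ℕ, b ≠ -(k : ℂ)) :
    ∃ D : ℝ, 0 ≤ D ∧ ∀ n : ℕ, (n + 1 : ℝ) ≤ D * ‖b + n‖ := by
  have ratio_tendsto : Tendsto (fun n : ℕ ↦ ‖(1 + 1 * n : ℂ) / (b + 1 * n)‖) atTop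
      (𝓝 ‖(1 / 1 : ℂ)‖) :=
    (tendsto_add_mul_div_add_mul_atTop_nhds 1 b 1 one_ne_zero).norm
  obtain ⟨D, hD⟩ := ratio_tendsto.bddAbove_range
  have ratio_le (n : ℕ) : ‖(1 + 1 * n : ℂ) / (b + 1 * n)‖ ≤ D := hD ⟨n, rfl⟩
  refine ⟨D, (norm_nonneg _).trans (ratio_le 0), fun n ↦ ?_⟩
  have hbn : 0 < ‖b + n‖ := norm_pos_iff.mpr fun h ↦ hb n (eq_neg_of_add_eq_zero_left h)
  have norm_one_add : ‖(1 + n : ℂ)‖ = n + 1 := by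
    rw [add_comm]
    exact_mod_cast Complex.norm_natCast (n + 1)
  simpa only [one_mul, norm_div, div_le_iff₀ hbn, norm_one_add] using ratio_le n

lemma exists_factorial_le_pow_mul_norm_poch {b : ℂ} (hb : ∀ k : ℕ, b ≠ -(k : ℂ)) :
    ∃ D : ℝ, 0 ≤ D ∧ ∀ n : ℕ, (n ! : ℝ) ≤ D ^ n * ‖poch b n‖ := by
  obtain ⟨D, hD, hDb⟩ := exists_natCast_add_one_le_mul_norm hb
  refine ⟨D, hD, fun n ↦ ?_⟩
  induction n with
  | zero => simp [poch_zero]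
  | succ n ih =>
    calc ((n + 1)! : ℝ) = (n + 1) * n ! := by rw [Nat.factorial_succ]; push_cast; rfl
      _ ≤ D * ‖b + n‖ * (D ^ n * ‖poch b n‖) := by gcongr; exact hDb n
      _ = D ^ (n + 1) * ‖poch b (n + 1)‖ := by rw [poch_succ, norm_mul]; ring

lemma exists_norm_prod_poch_le (a : List ℂ) :
    ∃ C : ℝ, 0 ≤ C ∧ ∀ n : ℕ, ‖(a.map (poch · n)).prod‖ ≤ C ^ n * (n ! : ℝ) ^ a.length := by
  induction a with
  | nil => exact ⟨1, zero_le_one, by simp⟩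
  | cons c a ih =>
    obtain ⟨C, hC, hCa⟩ := ih
    refine ⟨(‖c‖ + 1) * C, by positivity, fun n ↦ ?_⟩
    rw [List.map_cons, List.prod_cons, norm_mul, List.length_cons]
    calc ‖poch c n‖ * ‖(a.map (poch · n)).prod‖
        ≤ (‖c‖ + 1) ^ n * n ! * (C ^ n * (n ! : ℝ) ^ a.length) := by
          gcongr
          exacts [norm_poch_le c n, hCa n]
      _ = ((‖c‖ + 1) * C) ^ n * (n ! : ℝ) ^ (a.length + 1) := by rw [mul_pow]; ring

lemma exists_factorial_pow_le_norm_prod_poch {b : List ℂ}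
    (hb : ∀ c ∈ b, ∀ k : ℕ, c ≠ -(k : ℂ)) :
    ∃ D : ℝ, 0 ≤ D ∧ ∀ n : ℕ, (n ! : ℝ) ^ b.length ≤ D ^ n * ‖(b.map (poch · n)).prod‖ := by
  induction b with
  | nil => exact ⟨1, zero_le_one, by simp⟩
  | cons c b ih =>
    obtain ⟨hc, hb⟩ := List.forall_mem_cons.mp hb
    obtain ⟨D, hD, hDb⟩ := ih hb
    obtain ⟨E, hE, hEc⟩ := exists_factorial_le_pow_mul_norm_poch hc
    refine ⟨E * D, by positivity, fun n ↦ ?_⟩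
    rw [List.map_cons, List.prod_cons, norm_mul, List.length_cons]
    calc (n ! : ℝ) ^ (b.length + 1) = n ! * (n ! : ℝ) ^ b.length := by ring
      _ ≤ E ^ n * ‖poch c n‖ * (D ^ n * ‖(b.map (poch · n)).prod‖) := by
          gcongr
          exacts [hEc n, hDb n]
      _ = (E * D) ^ n * (‖poch c n‖ * ‖(b.map (poch · n)).prod‖) := by ring

lemma exists_norm_hypTerm_mul_factorial_pow_le (a : List ℂ) {b : List ℂ}
    (hb : ∀ c ∈ b, ∀ k : ℕ, c ≠ -(k : ℂ)) :
    ∃ K : ℝ, 0 ≤ K ∧ ∀ (x : ℂ) (n : ℕ),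
      ‖hypTerm a b x n‖ * (n ! : ℝ) ^ (b.length + 1) ≤
        (K * ‖x‖) ^ n * (n ! : ℝ) ^ a.length := by
  obtain ⟨C, hC, hCa⟩ := exists_norm_prod_poch_le a
  obtain ⟨D, hD, hDb⟩ := exists_factorial_pow_le_norm_prod_poch hb
  refine ⟨D * C, by positivity, fun x n ↦ ?_⟩
  have den_pos : 0 < ‖(b.map (poch · n)).prod‖ := by
    refine norm_pos_iff.mpr (List.prod_ne_zero fun h ↦ ?_)
    obtain ⟨c, hc, hc0⟩ := List.mem_map.mp h
    exact poch_ne_zero (hb c hc) n hc0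
  calc ‖hypTerm a b x n‖ * (n ! : ℝ) ^ (b.length + 1)
      = ‖(a.map (poch · n)).prod‖ / ‖(b.map (poch · n)).prod‖ * ‖x‖ ^ n *
          (n ! : ℝ) ^ b.length := by
        simp only [hypTerm, norm_div, norm_mul, norm_pow, Complex.norm_natCast,
          pow_succ]
        field_simp
    _ ≤ C ^ n * (n ! : ℝ) ^ a.length / ‖(b.map (poch · n)).prod‖ * ‖x‖ ^ n *
          (D ^ n * ‖(b.map (poch · n)).prod‖) := by
        gcongr
        exacts [hCa n, hDb n]
    _ = (D * C * ‖x‖) ^ n * (n ! : ℝ) ^ a.length := by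
        rw [mul_pow, mul_pow]
        field_simp

lemma summable_hypTerm {a b : List ℂ} (hab : a.length ≤ b.length)
    (hb : ∀ c ∈ b, ∀ k : ℕ, c ≠ -(k : ℂ)) (x : ℂ) : Summable (hypTerm a b x) := by
  obtain ⟨K, -, hK⟩ := exists_norm_hypTerm_mul_factorial_pow_le a hb
  refine (Real.summable_pow_div_factorial (K * ‖x‖)).of_norm_bounded fun n ↦ ?_
  have factorial_pos : (0 : ℝ) < n ! := Nat.cast_pos.mpr n.factorial_pos
  rw [le_div_iff₀ factorial_pos]
  refine le_of_mul_le_mul_right ?_ (pow_pos factorial_pos a.length)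
  calc ‖hypTerm a b x n‖ * n ! * (n ! : ℝ) ^ a.length
      ≤ ‖hypTerm a b x n‖ * n ! * (n ! : ℝ) ^ b.length := by
        gcongr
        exact Nat.one_le_cast.mpr n.factorial_pos
    _ = ‖hypTerm a b x n‖ * (n ! : ℝ) ^ (b.length + 1) := by ring
    _ ≤ (K * ‖x‖) ^ n * (n ! : ℝ) ^ a.length := hK x n

end Growth

section Hypergeometric

lemma hyp_eq_of_perm {a a' : List ℂ} (h : a.Perm a') (b : List ℂ) (x : ℂ) :
    hyp a b x = hyp a' b x := by
  simp only [hyp, hypTerm, (h.map _).prod_eq]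

lemma pow_div_factorial_mul_descFactorial {K : Type*} [Field K] [CharZero K] (y : K) (n k : ℕ) :
    y ^ (n + k) / (n + k)! * (n + k).descFactorial k = y ^ k * (y ^ n / n !) := by
  have factorial_eq : ((n + k)! : K) = n ! * (n + k).descFactorial k := by
    have := Nat.factorial_mul_descFactorial (Nat.le_add_left k n)
    rw [Nat.add_sub_cancel] at this
    exact_mod_cast this.symm
  have factorial_ne_zero := Nat.cast_ne_zero (R := K).mpr (n + k).factorial_ne_zero
  have descFactorial_ne_zero := right_ne_zero_of_mul (factorial_eq ▸ factorial_ne_zero)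
  rw [factorial_eq, pow_add]
  field_simp

lemma hypTerm_nil_singleton (b x : ℂ) (n : ℕ) :
    hypTerm [] [b] x n = x ^ n / n ! / poch b n := by
  simp only [hypTerm, List.map_nil, List.map_cons, List.prod_nil, List.prod_cons, mul_one]
  ring

lemma hypTerm_nil_singleton_add (b x : ℂ) (n k : ℕ) :
    hypTerm [] [b] x (n + k) * (n + k).descFactorial k =
      x ^ k / poch b k * hypTerm [] [b + k] x n := by
  rw [hypTerm_nil_singleton, hypTerm_nil_singleton, div_mul_eq_mul_div,
    pow_div_factorial_mul_descFactorial, add_comm n k, poch_add, mul_div_mul_comm]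

lemma hypTerm_nil_singleton_succ {b : ℂ} (hb : ∀ k : ℕ, b ≠ -(k : ℂ)) (x : ℂ) (n : ℕ) :
    hypTerm [] [b] x (n + 1) * ((n + 1) * (b + n)) = x * hypTerm [] [b] x n := by
  have hbn : b + n ≠ 0 := fun h ↦ hb n (eq_neg_of_add_eq_zero_left h)
  rw [hypTerm_nil_singleton, hypTerm_nil_singleton, poch_succ, pow_succ, Nat.factorial_succ]
  push_cast
  field_simp [n.cast_add_one_ne_zero (R := ℂ)]

lemma hasSum_of_hasSum_add_right {M : Type*} [AddCommMonoid M] [TopologicalSpace M] {f : ℕ → M}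
    {s : M} (k : ℕ) (hf : ∀ n < k, f n = 0) (h : HasSum (fun n ↦ f (n + k)) s) : HasSum f s := by
  refine ((add_left_injective k).hasSum_iff fun n hn ↦ hf n ?_).mp h
  exact lt_of_not_ge fun hkn ↦ hn ⟨n - k, Nat.sub_add_cancel hkn⟩

lemma hasSum_hypTerm_mul_descFactorial_mul {b x s : ℂ} {f : ℕ → ℂ} (k : ℕ)
    (h : HasSum (fun n ↦ hypTerm [] [b + k] x n * f (n + k)) s) :
    HasSum (fun n ↦ hypTerm [] [b] x n * (n.descFactorial k * f n)) (x ^ k / poch b k * s) := by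
  refine hasSum_of_hasSum_add_right k (fun n hn ↦ ?_) ?_
  · simp [Nat.descFactorial_of_lt hn]
  · simpa only [← mul_assoc, hypTerm_nil_singleton_add] using h.mul_left (x ^ k / poch b k)

lemma mul_hypTerm_eq_hypTerm_nil_singleton_mul {c b a : ℂ} (hc : ∀ k : ℕ, c ≠ -(k : ℂ))
    (ha : ∀ k : ℕ, 2 * a ≠ -(k : ℂ)) (x : ℂ) (n : ℕ) :
    c * hypTerm [c + 1, a + 1 / 2, a] [c, b, 2 * a] (4 * x) n =
      hypTerm [] [b] x n * ((c + n) * poch (2 * a + n) n) := by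
  have raise_numerator : c * poch (c + 1) n = poch c n * (c + n) := by
    rw [← poch_succ', poch_succ]
  have duplication : poch (2 * a) n * poch (2 * a + n) n =
      4 ^ n * poch a n * poch (a + 1 / 2) n := by
    rw [← poch_add, ← two_mul, poch_two_mul]
  have hcn := poch_ne_zero hc n
  have han := poch_ne_zero ha n
  calc c * hypTerm [c + 1, a + 1 / 2, a] [c, b, 2 * a] (4 * x) n
      = c * poch (c + 1) n * (4 ^ n * poch a n * poch (a + 1 / 2) n) /
          (poch c n * poch (2 * a) n) * (x ^ n / n ! / poch b n) := by
        simp only [hypTerm, List.map_nil, List.map_cons, List.prod_nil, List.prod_cons, mul_one,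
          mul_pow]
        ring
    _ = hypTerm [] [b] x n * ((c + n) * poch (2 * a + n) n) := by
        rw [raise_numerator, ← duplication, hypTerm_nil_singleton]
        field_simp

lemma hasSum_mul_hyp {c b a : ℂ} (hc : ∀ k : ℕ, c ≠ -(k : ℂ)) (hb : ∀ k : ℕ, b ≠ -(k : ℂ))
    (ha : ∀ k : ℕ, 2 * a ≠ -(k : ℂ)) (x : ℂ) :
    HasSum (fun n : ℕ ↦ hypTerm [] [b] x n * ((c + n) * poch (2 * a + n) n))
      (c * hyp [c + 1, a + 1 / 2, a] [c, b, 2 * a] (4 * x)) := by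
  have summable : Summable (hypTerm [c + 1, a + 1 / 2, a] [c, b, 2 * a] (4 * x)) :=
    summable_hypTerm (by simp) (by simp [hc, hb, ha]) _
  exact (summable.hasSum.mul_left c).congr_fun fun n ↦
    (mul_hypTerm_eq_hypTerm_nil_singleton_mul hc ha x n).symm

end Hypergeometric

section Laguerre

lemma hyp_neg_natCast (n : ℕ) (c x : ℂ) :
    hyp [-(n : ℂ)] [c] x = ∑ k ∈ range (n + 1), n.choose k / poch c k * (-x) ^ k := by
  have term_eq (k : ℕ) : hypTerm [-(n : ℂ)] [c] x k = n.choose k / poch c k * (-x) ^ k := by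
    have := Nat.cast_ne_zero (R := ℂ).mpr k.factorial_ne_zero
    simp only [hypTerm, List.map_nil, List.map_cons, List.prod_nil, List.prod_cons, mul_one,
      poch_neg_natCast, Nat.descFactorial_eq_factorial_mul_choose, neg_pow x]
    push_cast
    field_simp
  rw [hyp, tsum_congr term_eq]
  refine tsum_eq_sum fun k hk ↦ ?_
  rw [Nat.choose_eq_zero_of_lt (by simpa [Nat.lt_succ_iff] using hk)]
  simp

lemma lag_eq_sum_antidiagonal (n : ℕ) {v : ℂ} (hv : ∀ k : ℕ, v + 1 ≠ -(k : ℂ)) (x : ℂ) :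
    Lag n v x = ∑ p ∈ antidiagonal n,
      n.choose p.1 * poch (v + 1 + p.1) p.2 / n ! * (-x) ^ p.1 := by
  rw [Lag, hyp_neg_natCast, ← Nat.sum_antidiagonal_eq_sum_range_succ_mk
    (f := fun p ↦ n.choose p.1 / poch (v + 1) p.1 * (-x) ^ p.1), mul_sum]
  refine sum_congr rfl fun p hp ↦ ?_
  have := poch_ne_zero hv p.1
  rw [show poch (v + 1) n = poch (v + 1) p.1 * poch (v + 1 + p.1) p.2 by
    rw [← poch_add, mem_antidiagonal.mp hp]]
  field_simp

lemma hasSum_pow_div_factorial_mul_descFactorial (y : ℂ) (k : ℕ) :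
    HasSum (fun m : ℕ ↦ y ^ m / m ! * m.descFactorial k) (y ^ k * Complex.exp y) := by
  refine hasSum_of_hasSum_add_right k (fun m hm ↦ ?_) ?_
  · simp [Nat.descFactorial_of_lt hm]
  · have exp_series := (NormedSpace.expSeries_div_hasSum_exp y).mul_left (y ^ k)
    rw [← Complex.exp_eq_exp_ℂ] at exp_series
    exact exp_series.congr_fun fun m ↦ pow_div_factorial_mul_descFactorial y m k

lemma hasSum_exp_neg_mul_lag (n : ℕ) {v : ℂ} (hv : ∀ k : ℕ, v + 1 ≠ -(k : ℂ)) (x : ℂ) :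
    HasSum (fun m : ℕ ↦ (-x) ^ m / m ! * poch (v + 1 + m) n / n !)
      (Complex.exp (-x) * Lag n v x) := by
  have vandermonde (m : ℕ) : poch (v + 1 + m) n =
      ∑ p ∈ antidiagonal n, n.choose p.1 * (m.descFactorial p.1 * poch (v + 1 + p.1) p.2) := by
    rw [show v + 1 + m = (m - n + 1) + (v + 1) + n - 1 by ring,
      ← sum_antidiagonal_choose_mul_poch_mul_poch]
    refine sum_congr rfl fun p hp ↦ ?_
    have hn : (n : ℂ) = p.1 + p.2 := by exact_mod_cast (mem_antidiagonal.mp hp).symm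
    rw [← poch_natCast_sub_add_one, hn]
    ring_nf
  simp only [lag_eq_sum_antidiagonal n hv, vandermonde, mul_sum, sum_div]
  refine hasSum_sum fun p _ ↦ ?_
  have exp_moment := (hasSum_pow_div_factorial_mul_descFactorial (-x) p.1).mul_left
    (n.choose p.1 * poch (v + 1 + p.1) p.2 / n !)
  rw [mul_left_comm, mul_comm (Complex.exp _)]
  exact exp_moment.congr_fun fun m ↦ by ring

/-- General term of the double series obtained from `e^{-x} ∑ₙ (-x)^n L_n^{(v)}(x) / (μ)_n` by
expanding each `e^{-x} L_n^{(v)}(x)` in powers of `-x`; `p.1` is `n` and `p.2` the exponent of the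
expansion. The `₀F₁` term `hypTerm [] [μ] (-x) n` is `(-x)^n / ((μ)_n n!)`. -/
noncomputable def lagDoubleTerm (v μ x : ℂ) (p : ℕ × ℕ) : ℂ :=
  hypTerm [] [μ] (-x) p.1 * ((-x) ^ p.2 / p.2 ! * poch (v + 1 + p.2) p.1)

/-- The series `∑_N (-x)^N (μ+v+N)_N / ((μ)_N N!)`, which is the Laguerre sum
`e^{-x} ∑ₙ (-x)^n L_n^{(v)}(x) / (μ)_n`. It equals `₂F₂[(μ+v)/2, (μ+v+1)/2; μ, μ+v; -4x]`, but
this form also makes sense when `μ + v` is a nonpositive integer. -/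
noncomputable def lagSeries (v μ x : ℂ) : ℂ :=
  ∑' N : ℕ, hypTerm [] [μ] (-x) N * poch (μ + v + N) N

lemma summable_lagDoubleTerm {μ : ℂ} (hμ : ∀ k : ℕ, μ ≠ -(k : ℂ)) (v x : ℂ) :
    Summable (lagDoubleTerm v μ x) := by
  obtain ⟨K, hK, hKμ⟩ := exists_norm_hypTerm_mul_factorial_pow_le [] (b := [μ]) (by simpa using hμ)
  have majorant_summable := (Real.summable_pow_div_factorial
      (K * ‖x‖ * (‖v + 1‖ + 1) * 2)).mul_of_nonneg
    (Real.summable_pow_div_factorial (‖x‖ * 2)) (fun n ↦ by positivity) (fun n ↦ by positivity)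
  refine majorant_summable.of_norm_bounded fun ⟨n, m⟩ ↦ ?_
  have term_le : ‖hypTerm [] [μ] (-x) n‖ ≤ (K * ‖x‖) ^ n / (n ! : ℝ) ^ 2 := by
    rw [le_div_iff₀ (by positivity)]
    simpa using hKμ (-x) n
  calc ‖lagDoubleTerm v μ x (n, m)‖
      = ‖hypTerm [] [μ] (-x) n‖ * (‖x‖ ^ m / m ! * ‖poch (v + 1 + m) n‖) := by
        simp [lagDoubleTerm]
    _ ≤ (K * ‖x‖) ^ n / (n ! : ℝ) ^ 2 *
          (‖x‖ ^ m / m ! * ((‖v + 1‖ + 1) ^ n * (2 ^ (m + n) * n !))) := by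
        gcongr
        exact norm_poch_add_natCast_le (v + 1) m n
    _ = (K * ‖x‖ * (‖v + 1‖ + 1) * 2) ^ n / n ! * ((‖x‖ * 2) ^ m / m !) := by
        simp only [mul_pow, pow_add]
        field_simp

lemma sum_antidiagonal_lagDoubleTerm {μ : ℂ} (hμ : ∀ k : ℕ, μ ≠ -(k : ℂ)) (v x : ℂ) (N : ℕ) :
    ∑ p ∈ antidiagonal N, lagDoubleTerm v μ x p =
      hypTerm [] [μ] (-x) N * poch (μ + v + N) N := by
  rw [show μ + v + N = (v + 1) + μ + N - 1 by ring,
    ← sum_antidiagonal_choose_mul_poch_mul_poch, mul_sum]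
  refine sum_congr rfl fun p hp ↦ ?_
  obtain ⟨i, j⟩ := p
  obtain rfl : i + j = N := mem_antidiagonal.mp hp
  have hij := poch_ne_zero (add_natCast_ne_neg_natCast hμ i) j
  simp only [lagDoubleTerm, hypTerm_nil_singleton, poch_add, pow_add, Nat.cast_add_choose]
  have factorial_ne_zero := Nat.cast_ne_zero (R := ℂ).mpr (i + j).factorial_ne_zero
  field_simp

lemma hasSum_antidiagonal_lagDoubleTerm {μ : ℂ} (hμ : ∀ k : ℕ, μ ≠ -(k : ℂ)) (v x : ℂ) :
    HasSum (fun N : ℕ ↦ hypTerm [] [μ] (-x) N * poch (μ + v + N) N)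
      (∑' p, lagDoubleTerm v μ x p) := by
  have sigma_hasSum := sigmaAntidiagonalEquivProd.hasSum_iff.mpr
    (summable_lagDoubleTerm hμ v x).hasSum
  refine sigma_hasSum.sigma fun N ↦ ?_
  rw [← sum_antidiagonal_lagDoubleTerm hμ, ← sum_coe_sort]
  exact hasSum_fintype _

lemma tsum_lagDoubleTerm {μ : ℂ} (hμ : ∀ k : ℕ, μ ≠ -(k : ℂ)) (v x : ℂ) :
    ∑' p, lagDoubleTerm v μ x p = lagSeries v μ x :=
  (hasSum_antidiagonal_lagDoubleTerm hμ v x).tsum_eq.symm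

lemma hasSum_lagSeries {μ : ℂ} (hμ : ∀ k : ℕ, μ ≠ -(k : ℂ)) (v x : ℂ) :
    HasSum (fun N : ℕ ↦ hypTerm [] [μ] (-x) N * poch (μ + v + N) N) (lagSeries v μ x) :=
  (hasSum_antidiagonal_lagDoubleTerm hμ v x).summable.hasSum

lemma hasSum_exp_neg_mul_pow_div_poch_mul_lag {v μ : ℂ} (hv : ∀ k : ℕ, v + 1 ≠ -(k : ℂ))
    (hμ : ∀ k : ℕ, μ ≠ -(k : ℂ)) (x : ℂ) :
    HasSum (fun n : ℕ ↦ Complex.exp (-x) * ((-x) ^ n / poch μ n * Lag n v x))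
      (lagSeries v μ x) := by
  rw [← tsum_lagDoubleTerm hμ]
  refine (summable_lagDoubleTerm hμ v x).hasSum.prod_fiberwise fun n ↦ ?_
  rw [mul_left_comm]
  refine ((hasSum_exp_neg_mul_lag n hv x).mul_left ((-x) ^ n / poch μ n)).congr_fun fun m ↦ ?_
  rw [lagDoubleTerm, hypTerm_nil_singleton]
  ring

end Laguerre

section Contiguous

lemma hasSum_neg_mul_lagSeries {μ : ℂ} (hμ : ∀ k : ℕ, μ ≠ -(k : ℂ)) (v x : ℂ) :
    HasSum (fun N : ℕ ↦ hypTerm [] [μ] (-x) N *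
        (N * ((μ + N - 1) * poch (μ + v + N) (N - 1))))
      (-x * lagSeries (v + 1) μ x) := by
  refine hasSum_of_hasSum_add_right 1 (fun N hN ↦ ?_) ?_
  · simp [Nat.lt_one_iff.mp hN]
  · refine ((hasSum_lagSeries hμ (v + 1) x).mul_left (-x)).congr_fun fun n ↦ ?_
    rw [← mul_assoc (-x), ← hypTerm_nil_singleton_succ hμ, Nat.add_sub_cancel]
    push_cast
    ring_nf

/-- The `₃F₃` of the first term on the right-hand side of the theorem; the other two are the same
function at `μ + 1` and `μ + 2`. -/
noncomputable def lagHyp (v μ x : ℂ) : ℂ :=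
  hyp [v + 3, μ / 2 + v / 2 + 1, μ / 2 + v / 2 + 1 / 2] [v + 2, μ, μ + v + 1] (-4 * x)

lemma lagHyp_add_one (v μ x : ℂ) : lagHyp v (μ + 1) x =
    hyp [v + 3, μ / 2 + v / 2 + 1, μ / 2 + v / 2 + 3 / 2] [v + 2, μ + 1, μ + v + 2] (-4 * x) := by
  rw [lagHyp, hyp_eq_of_perm ((List.Perm.swap _ _ []).cons _)]
  ring_nf

lemma lagHyp_add_two (v μ x : ℂ) : lagHyp v (μ + 2) x =
    hyp [v + 3, μ / 2 + v / 2 + 2, μ / 2 + v / 2 + 3 / 2] [v + 2, μ + 2, μ + v + 3] (-4 * x) := by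
  rw [lagHyp]
  ring_nf

lemma hasSum_mul_lagHyp {v μ : ℂ} (hv : ∀ k : ℕ, v + 2 ≠ -(k : ℂ))
    (hμ : ∀ k : ℕ, μ ≠ -(k : ℂ)) (hμv : ∀ k : ℕ, μ + v + 1 ≠ -(k : ℂ)) (x : ℂ) :
    HasSum (fun n : ℕ ↦ hypTerm [] [μ] (-x) n * ((v + 2 + n) * poch (μ + v + 1 + n) n))
      ((v + 2) * lagHyp v μ x) := by
  have two_mul_eq : 2 * (μ / 2 + v / 2 + 1 / 2) = μ + v + 1 := by ring
  have series := hasSum_mul_hyp hv hμ (two_mul_eq ▸ hμv) (-x)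
  rwa [two_mul_eq, show v + 2 + 1 = v + 3 by ring, show (4 : ℂ) * -x = -4 * x by ring,
    add_assoc (μ / 2 + v / 2), add_halves] at series

lemma hasSum_mul_lagHyp_add_natCast {v μ : ℂ} (hv : ∀ k : ℕ, v + 2 ≠ -(k : ℂ))
    (hμ : ∀ k : ℕ, μ ≠ -(k : ℂ)) (hμv : ∀ k : ℕ, μ + v + 1 ≠ -(k : ℂ)) (x : ℂ) (k : ℕ) :
    HasSum (fun N : ℕ ↦ hypTerm [] [μ] (-x) N *
        (N.descFactorial k * ((v + 2 + N - k) * poch (μ + v + 1 + N) (N - k))))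
      ((-x) ^ k / poch μ k * ((v + 2) * lagHyp v (μ + k) x)) := by
  have hμkv (j : ℕ) : μ + k + v + 1 ≠ -(j : ℂ) := by
    rw [show μ + k + v + 1 = μ + v + 1 + k by ring]
    exact add_natCast_ne_neg_natCast hμv k j
  refine hasSum_hypTerm_mul_descFactorial_mul k ?_
  refine (hasSum_mul_lagHyp hv (add_natCast_ne_neg_natCast hμ k) hμkv x).congr_fun fun n ↦ ?_
  rw [Nat.add_sub_cancel]
  push_cast
  ring_nf

lemma lagSeries_contiguous {v μ : ℂ} (hv : ∀ k : ℕ, v + 2 ≠ -(k : ℂ))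
    (hμ : ∀ k : ℕ, μ ≠ -(k : ℂ)) (hμv : ∀ k : ℕ, μ + v + 1 ≠ -(k : ℂ)) (x : ℂ) :
    lagSeries v μ x - x / (v + 2) * lagSeries (v + 1) μ x =
      lagHyp v μ x + 2 * x / μ * lagHyp v (μ + 1) x +
        x ^ 2 / (μ * (μ + 1)) * lagHyp v (μ + 2) x := by
  have lhs := ((hasSum_lagSeries hμ v x).mul_left (v + 2)).add (hasSum_neg_mul_lagSeries hμ v x)
  have shifted := hasSum_mul_lagHyp_add_natCast hv hμ hμv x
  have rhs := ((shifted 0).sub ((shifted 1).mul_left 2)).add (shifted 2)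
  have scaled := lhs.unique <| rhs.congr_fun fun N ↦ by
    have coeff := poch_contiguous (v + 2) (μ + v + N) N
    rw [show μ + v + 1 + N = μ + v + N + 1 by ring]
    simp only [Nat.cast_descFactorial_two, Nat.descFactorial_zero, Nat.descFactorial_one,
      Nat.sub_zero, Nat.cast_zero, Nat.cast_one, Nat.cast_ofNat]
    linear_combination hypTerm [] [μ] (-x) N * coeff
  have hv0 : v + 2 ≠ 0 := by simpa using hv 0
  have hμ0 : μ ≠ 0 := by simpa using hμ 0
  have hμ1 : μ + 1 ≠ 0 := by simpa using add_natCast_ne_neg_natCast hμ 1 0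
  simp only [poch_succ, poch_zero, Nat.cast_zero, Nat.cast_one, Nat.cast_ofNat, add_zero,
    one_mul] at scaled
  field_simp at scaled ⊢
  linear_combination scaled

end Contiguous

/-- Special case `e = v+1` of Theorem 3. -/
theorem stmt_14 (v μ : ℂ)
    (hv1 : ∀ k : ℕ, v + 1 ≠ -(k : ℂ)) (hv2 : ∀ k : ℕ, v + 2 ≠ -(k : ℂ))
    (hv3 : ∀ k : ℕ, v + 3 ≠ -(k : ℂ))
    (hμ : ∀ k : ℕ, μ ≠ -(k : ℂ)) (hμ1 : ∀ k : ℕ, μ + 1 ≠ -(k : ℂ))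
    (hμ2 : ∀ k : ℕ, μ + 2 ≠ -(k : ℂ)) (hμv : ∀ k : ℕ, μ + v + 1 ≠ -(k : ℂ))
    (x : ℂ) :
    (Complex.exp (-x) * ∑' n : ℕ, (-x) ^ n / poch μ n *
        (Lag n v x - x / (v + 2) * Lag n (v + 1) x)) =
      hyp [v + 3, μ / 2 + v / 2 + 1, μ / 2 + v / 2 + 1 / 2]
          [v + 2, μ, μ + v + 1] (-4 * x) +
        2 * x / μ *
          hyp [v + 3, μ / 2 + v / 2 + 1, μ / 2 + v / 2 + 3 / 2]
            [v + 2, μ + 1, μ + v + 2] (-4 * x) +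
        x ^ 2 / (μ * (μ + 1)) *
          hyp [v + 3, μ / 2 + v / 2 + 2, μ / 2 + v / 2 + 3 / 2]
            [v + 2, μ + 2, μ + v + 3] (-4 * x) := by
  have lag_sum : HasSum
      (fun n : ℕ ↦ Complex.exp (-x) * ((-x) ^ n / poch μ n *
        (Lag n v x - x / (v + 2) * Lag n (v + 1) x)))
      (lagSeries v μ x - x / (v + 2) * lagSeries (v + 1) μ x) := by
    have hv2' : ∀ k : ℕ, v + 1 + 1 ≠ -(k : ℂ) := by simpa only [add_assoc, one_add_one_eq_two]
    refine ((hasSum_exp_neg_mul_pow_div_poch_mul_lag hv1 hμ x).sub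
      ((hasSum_exp_neg_mul_pow_div_poch_mul_lag hv2' hμ x).mul_left (x / (v + 2)))).congr_fun
        fun n ↦ ?_
    ring
  rw [← tsum_mul_left, lag_sum.tsum_eq, lagSeries_contiguous hv2 hμ hμv, lagHyp_add_one,
    lagHyp_add_two, lagHyp]
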